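/- For every integer k ≥ 1 there exists a constant c_k > 0 such that the following holds. Let H : ℕ → ℕ be any function with H(X) → ∞ as X → ∞ and H(X) ≤ X·(log X)^{−c_k} for all sufficiently large X. Then, with 𝔼_f the Steinhaus expectation at level y = X + H(X) and A_H(f,x) := H(X)^{-1/2} ∑_{x < n ≤ x+H(X)} f(n), one has 𝔼_f ( (1/X) ∑_{x=1}^{X} |A_H(f,x)|^{2k} − k! )² → 0 as X → ∞. -/

import Mathlib

open MeasureTheory

/-- The Steinhaus probability space at level `y`: a uniform random point
`ω p ∈ [0,1]` for each coordinate `p ≤ y` (only the prime coordinates are used);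
the random multiplicative function has `f(p) = e^{2πi ω(p)}`, which is uniformly
distributed on the unit circle, independently over primes `p ≤ y`. -/
noncomputable def steinhausMeasure (y : ℕ) : Measure (Fin (y + 1) → ℝ) :=
  Measure.pi fun _ => volume.restrict (Set.Ioc (0 : ℝ) 1)

/-- The Steinhaus random completely multiplicative function at level `y`:
`f_ω(n) = ∏_{p ≤ y prime} e^{2πi ω(p) v_p(n)}`. -/
noncomputable def steinhausF (y : ℕ) (ω : Fin (y + 1) → ℝ) (n : ℕ) : ℂ :=
  ∏ p ∈ (Finset.range (y + 1)).attach,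
    if Nat.Prime (p : ℕ) then
      Complex.exp
        (((2 * Real.pi * ω ⟨(p : ℕ), Finset.mem_range.mp p.2⟩ *
            (padicValNat (p : ℕ) n : ℝ) : ℝ) : ℂ) * Complex.I)
    else 1

/-- `A_H(f, x) = H(X)^{-1/2} ∑_{x < n ≤ x + H(X)} f(n)` at level `y = X + H(X)`. -/
noncomputable def AHf (X : ℕ) (H : ℕ → ℕ) (ω : Fin (X + H X + 1) → ℝ) (x : ℕ) : ℂ :=
  ((Real.sqrt (H X) : ℂ))⁻¹ * ∑ n ∈ Finset.Ioc x (x + H X), steinhausF (X + H X) ω n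

instance steinhausMeasure_isProbabilityMeasure (y : ℕ) :
    IsProbabilityMeasure (steinhausMeasure y) := by
  have : IsProbabilityMeasure (volume.restrict (Set.Ioc (0 : ℝ) 1)) := ⟨by simp⟩
  unfold steinhausMeasure
  infer_instance

lemma steinhausF_eq_prod_fin (y : ℕ) (ω : Fin (y + 1) → ℝ) (n : ℕ) :
    steinhausF y ω n = ∏ i : Fin (y + 1), if Nat.Prime (i : ℕ) then
      Complex.exp (((2 * Real.pi * ω i * (padicValNat (i : ℕ) n : ℝ) : ℝ) : ℂ) * Complex.I)
    else 1 := by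
  unfold steinhausF
  refine Finset.prod_bij' (fun p _ => ⟨(p : ℕ), Finset.mem_range.mp p.2⟩)
    (fun i _ => ⟨(i : ℕ), Finset.mem_range.mpr i.2⟩) ?_ ?_ ?_ ?_ ?_ <;> simp

lemma steinhausF_mul (y : ℕ) (ω : Fin (y + 1) → ℝ) {m n : ℕ} (hm : m ≠ 0) (hn : n ≠ 0) :
    steinhausF y ω (m * n) = steinhausF y ω m * steinhausF y ω n := by
  simp only [steinhausF_eq_prod_fin, ← Finset.prod_mul_distrib]
  refine Finset.prod_congr rfl fun i _ => ?_
  split_ifs with hp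
  · have := Fact.mk hp
    rw [padicValNat.mul hm hn, ← Complex.exp_add]
    congr 1
    push_cast
    ring
  · simp

lemma steinhausF_one (y : ℕ) (ω : Fin (y + 1) → ℝ) : steinhausF y ω 1 = 1 := by
  simp [steinhausF_eq_prod_fin]

lemma steinhausF_prod {ι : Type*} (y : ℕ) (ω : Fin (y + 1) → ℝ) (s : Finset ι) (a : ι → ℕ)
    (ha : ∀ i ∈ s, a i ≠ 0) :
    steinhausF y ω (∏ i ∈ s, a i) = ∏ i ∈ s, steinhausF y ω (a i) := by
  classical
  induction s using Finset.induction_on with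
  | empty => simp [steinhausF_one]
  | insert i s hi ih =>
    rw [Finset.prod_insert hi, Finset.prod_insert hi, steinhausF_mul, ih]
    · exact fun j hj => ha j (Finset.mem_insert_of_mem hj)
    · exact ha i (Finset.mem_insert_self _ _)
    · exact Finset.prod_ne_zero_iff.mpr fun j hj => ha j (Finset.mem_insert_of_mem hj)

lemma continuous_steinhausF (y n : ℕ) : Continuous fun ω => steinhausF y ω n := by
  simp only [steinhausF_eq_prod_fin]
  refine continuous_finsetProd _ fun i _ => ?_
  split_ifs <;> fun_prop

lemma norm_steinhausF (y : ℕ) (ω : Fin (y + 1) → ℝ) (n : ℕ) : ‖steinhausF y ω n‖ = 1 := by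
  rw [steinhausF_eq_prod_fin, norm_prod]
  refine Finset.prod_eq_one fun i _ => ?_
  split_ifs
  · exact Complex.norm_exp_ofReal_mul_I _
  · simp

lemma integral_exp_two_pi_int (j : ℤ) :
    ∫ t in Set.Ioc (0 : ℝ) 1, Complex.exp (2 * Real.pi * Complex.I * j * t) =
      if j = 0 then 1 else 0 := by
  rw [← intervalIntegral.integral_of_le zero_le_one]
  split_ifs with hj
  · simp [hj]
  · have hc : 2 * (Real.pi : ℂ) * Complex.I * j ≠ 0 := by
      simp [hj, Real.pi_ne_zero]
    rw [integral_exp_mul_complex hc]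
    have : Complex.exp (2 * Real.pi * Complex.I * j * (1 : ℝ)) = 1 := by
      rw [Complex.exp_eq_one_iff]
      exact ⟨j, by push_cast; ring⟩
    rw [this]
    simp

lemma integral_steinhausF_mul_conj {y m n : ℕ} (hm : m ≠ 0) (hn : n ≠ 0)
    (hmy : ∀ p, p.Prime → p ∣ m → p ≤ y) (hny : ∀ p, p.Prime → p ∣ n → p ≤ y) :
    ∫ ω, steinhausF y ω m * (starRingEnd ℂ) (steinhausF y ω n) ∂(steinhausMeasure y) =
      if m = n then 1 else 0 := by
  have key : ∀ ω : Fin (y + 1) → ℝ, steinhausF y ω m * (starRingEnd ℂ) (steinhausF y ω n) =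
      ∏ i : Fin (y + 1), Complex.exp (2 * Real.pi * Complex.I *
        ((if Nat.Prime (i : ℕ) then (padicValNat i m : ℤ) - padicValNat i n else 0 : ℤ) : ℂ) *
        (ω i : ℝ)) := by
    intro ω
    simp only [steinhausF_eq_prod_fin, map_prod, ← Finset.prod_mul_distrib]
    refine Finset.prod_congr rfl fun i _ => ?_
    split_ifs with hp
    · rw [← Complex.exp_conj, ← Complex.exp_add]
      congr 1
      simp only [map_mul, Complex.conj_ofReal, Complex.conj_I]
      simp only [Complex.ofReal_mul, Complex.ofReal_natCast, Complex.ofReal_ofNat,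
        Int.cast_sub, Int.cast_natCast]
      ring
    · simp
  simp only [key]
  rw [steinhausMeasure, integral_fintype_prod_eq_prod (𝕜 := ℂ)
    (f := fun (i : Fin (y + 1)) (t : ℝ) => Complex.exp (2 * Real.pi * Complex.I *
        ((if Nat.Prime (i : ℕ) then (padicValNat i m : ℤ) - padicValNat i n else 0 : ℤ) : ℂ) *
        (t : ℝ)))]
  simp only [integral_exp_two_pi_int]
  split_ifs with h
  · subst h
    simp
  · rw [Finset.prod_ite_zero, if_neg]
    intro hall
    refine h (Nat.eq_of_factorization_eq hm hn fun p => ?_)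
    by_cases hp : p.Prime
    · rw [Nat.factorization_def _ hp, Nat.factorization_def _ hp]
      by_cases hpy : p ≤ y
      · have := hall ⟨p, by omega⟩ (Finset.mem_univ _)
        simp only [hp, if_true] at this
        omega
      · rw [padicValNat.eq_zero_of_not_dvd fun hd => hpy (hmy p hp hd),
          padicValNat.eq_zero_of_not_dvd fun hd => hpy (hny p hp hd)]
    · simp [Nat.factorization_eq_zero_of_not_prime _ hp]

lemma integrable_normSq_sum_steinhausF {ι : Type*} (y : ℕ) (T : Finset ι) (u : ι → ℕ) :
    Integrable (fun ω => ‖∑ t ∈ T, steinhausF y ω (u t)‖ ^ 2) (steinhausMeasure y) := by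
  refine Integrable.of_bound (C := (T.card : ℝ) ^ 2) ?_ (Filter.Eventually.of_forall fun ω => ?_)
  · refine Continuous.aestronglyMeasurable ?_
    exact (continuous_finsetSum _ fun t _ => continuous_steinhausF y (u t)).norm.pow 2
  · rw [norm_pow, norm_norm]
    gcongr
    refine (norm_sum_le _ _).trans ?_
    simp [norm_steinhausF]

/-- The second moment of a sum of values of a Steinhaus function counts coincidences. -/
lemma integral_normSq_sum_steinhausF {ι : Type*} {y : ℕ} (T : Finset ι) (u : ι → ℕ)
    (hu : ∀ t ∈ T, u t ≠ 0) (huy : ∀ t ∈ T, ∀ p, p.Prime → p ∣ u t → p ≤ y) :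
    ∫ ω, ‖∑ t ∈ T, steinhausF y ω (u t)‖ ^ 2 ∂(steinhausMeasure y) =
      ∑ s ∈ T, ((T.filter fun t => u s = u t).card : ℝ) := by
  have hint : ∀ s t, Integrable (fun ω => steinhausF y ω (u s) *
      (starRingEnd ℂ) (steinhausF y ω (u t))) (steinhausMeasure y) := fun s t => by
    refine Integrable.of_bound (C := 1) ?_ (Filter.Eventually.of_forall fun ω => ?_)
    · exact ((continuous_steinhausF y _).mul
        (Complex.continuous_conj.comp (continuous_steinhausF y _))).aestronglyMeasurable
    · simp [norm_steinhausF]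
  apply Complex.ofReal_injective
  rw [← integral_complex_ofReal]
  have : ∀ ω, ((‖∑ t ∈ T, steinhausF y ω (u t)‖ ^ 2 : ℝ) : ℂ) =
      ∑ s ∈ T, ∑ t ∈ T, steinhausF y ω (u s) * (starRingEnd ℂ) (steinhausF y ω (u t)) := by
    intro ω
    rw [← Finset.sum_mul_sum, ← map_sum, Complex.mul_conj, Complex.normSq_eq_norm_sq]
  simp only [this]
  rw [integral_finsetSum _ fun s _ => integrable_finsetSum _ fun t _ => hint s t]
  push_cast
  refine Finset.sum_congr rfl fun s hs => ?_
  rw [integral_finsetSum _ fun t _ => hint s t, Finset.card_filter]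
  push_cast
  refine Finset.sum_congr rfl fun t ht => ?_
  rw [integral_steinhausF_mul_conj (hu s hs) (hu t ht) (huy s hs) (huy t ht)]

lemma exists_dvd_factorization_of_dvd_prod {ι : Type*} [DecidableEq ι] (s : Finset ι) (a : ι → ℕ) :
    ∀ β, β ∣ ∏ i ∈ s, a i →
      ∃ g : ι → ℕ, (∀ i ∈ s, g i ∣ a i) ∧ (∀ i ∉ s, g i = 1) ∧ ∏ i ∈ s, g i = β := by
  induction s using Finset.induction_on with
  | empty =>
    exact fun β hβ => ⟨fun _ => 1, by simp, by simp, by simpa using (Nat.dvd_one.mp hβ).symm⟩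
  | insert i s hi ih =>
    intro β hβ
    rw [Finset.prod_insert hi] at hβ
    obtain ⟨d, e, hd, he, rfl⟩ := exists_dvd_and_dvd_of_dvd_mul hβ
    obtain ⟨g, hg, hg1, rfl⟩ := ih e he
    have hs : ∀ j ∈ s, Function.update g i d j = g j := fun j hj =>
      Function.update_of_ne (ne_of_mem_of_not_mem hj hi) _ _
    refine ⟨Function.update g i d, fun j hj => ?_, fun j hj => ?_, ?_⟩
    · rcases Finset.mem_insert.mp hj with rfl | hj
      · simpa using hd
      · rw [hs j hj]
        exact hg j hj
    · rw [Finset.mem_insert, not_or] at hj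
      rw [Function.update_of_ne hj.1]
      exact hg1 j hj.2
    · rw [Finset.prod_insert hi, Function.update_self, Finset.prod_congr rfl hs]

/-- Some product of divisors of the `a i`, each at most `H`, with divisors of the `c j` lies in
`(x, x + H]`. -/
def HasShortDivisorProduct {k : ℕ} (H x : ℕ) (a c : Fin k → ℕ) : Prop :=
  ∃ h g : Fin k → ℕ, (∀ j, h j ∣ c j) ∧ (∀ i, g i ∈ Finset.Icc 1 H) ∧ (∀ i, g i ∣ a i) ∧
    (∏ j, h j) * ∏ i, g i ∈ Finset.Ioc x (x + H)

lemma map_eq_or_hasShortDivisorProduct {k H x D : ℕ} (hH : 1 ≤ H) {a b c : Fin k → ℕ}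
    (ha : ∀ i, a i ∈ Finset.Ioc x (x + H)) (hb : ∀ i, b i ∈ Finset.Ioc x (x + H)) (n : ℕ) :
    ∀ s t : Finset (Fin k), s.card = n → t.card = n →
      (∏ i ∈ s, a i) * ∏ j, c j = (∏ i ∈ t, b i) * D →
      s.val.map a = t.val.map b ∨ HasShortDivisorProduct H x a c := by
  induction n with
  | zero =>
    intro s t hs ht _
    rw [Finset.card_eq_zero.mp hs, Finset.card_eq_zero.mp ht]
    simp
  | succ n ih =>
    intro s t hs ht h
    by_cases hij : ∃ i ∈ s, ∃ j ∈ t, a i = b j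
    · obtain ⟨i, hi, j, hj, hab⟩ := hij
      have hai : 0 < a i := by have := Finset.mem_Ioc.mp (ha i); omega
      refine (ih (s.erase i) (t.erase j) ?_ ?_ ?_).imp_left fun hm => ?_
      · rw [Finset.card_erase_of_mem hi, hs]; rfl
      · rw [Finset.card_erase_of_mem hj, ht]; rfl
      · rw [← Finset.mul_prod_erase _ _ hi, ← Finset.mul_prod_erase _ _ hj, ← hab, mul_assoc,
          mul_assoc] at h
        exact Nat.eq_of_mul_eq_mul_left hai h
      · rw [← Multiset.cons_erase (Finset.mem_val.mpr hi),
          ← Multiset.cons_erase (Finset.mem_val.mpr hj), Multiset.map_cons, Multiset.map_cons, hab,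
          ← Finset.erase_val, ← Finset.erase_val, hm]
    · push Not at hij
      right
      obtain ⟨j, hj⟩ : t.Nonempty := Finset.card_pos.mp (by omega)
      have hdvd : b j ∣ (∏ i ∈ s, a i) * ∏ j, c j := by
        rw [h]
        exact (Finset.dvd_prod_of_mem _ hj).mul_right _
      obtain ⟨d, e, hd, he, hde⟩ := exists_dvd_and_dvd_of_dvd_mul hdvd
      obtain ⟨g, hg, hg1, rfl⟩ := exists_dvd_factorization_of_dvd_prod s a d hd
      obtain ⟨h', hh, -, rfl⟩ := exists_dvd_factorization_of_dvd_prod Finset.univ c e he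
      have hprod : ∏ i, g i = ∏ i ∈ s, g i :=
        (Finset.prod_subset (Finset.subset_univ s) fun i _ hi => hg1 i hi).symm
      refine ⟨h', g, fun j => hh j (Finset.mem_univ _), fun i => ?_, fun i => ?_, ?_⟩
      · by_cases hi : i ∈ s
        · have h1 := Finset.mem_Ioc.mp (ha i)
          have h2 := Finset.mem_Ioc.mp (hb j)
          have hga := hg i hi
          have hgb : g i ∣ b j := by
            rw [hde]
            exact (Finset.dvd_prod_of_mem _ hi).mul_right _
          refine Finset.mem_Icc.mpr ⟨Nat.pos_of_dvd_of_pos hga (by omega), ?_⟩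
          rcases lt_or_gt_of_ne (hij i hi j hj) with hlt | hlt
          · have := Nat.le_of_dvd (by omega) (Nat.dvd_sub hgb hga)
            omega
          · have := Nat.le_of_dvd (by omega) (Nat.dvd_sub hga hgb)
            omega
        · simp [hg1 i hi, hH]
      · by_cases hi : i ∈ s
        · exact hg i hi
        · simp [hg1 i hi]
      · rw [hprod, mul_comm, ← hde]
        exact hb j

lemma exists_perm_of_map_univ_eq {k : ℕ} {a b : Fin k → ℕ}
    (h : Finset.univ.val.map a = Finset.univ.val.map b) :
    ∃ σ : Equiv.Perm (Fin k), b = a ∘ σ := by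
  have hcard : ∀ n, Fintype.card {i // b i = n} = Fintype.card {i // a i = n} := fun n => by
    have := congrArg (Multiset.count n) h
    simp only [Multiset.count_map, ← Finset.filter_val, Finset.card_val] at this
    rw [Fintype.card_subtype, Fintype.card_subtype]
    simpa [eq_comm] using this.symm
  exact ⟨Equiv.ofFiberEquiv fun n => Fintype.equivOfCardEq (hcard n),
    funext fun i => (Equiv.ofFiberEquiv_map _ i).symm⟩

lemma exists_perm_or_hasShortDivisorProduct {k H x D : ℕ} (hH : 1 ≤ H) {a b c : Fin k → ℕ}
    (ha : ∀ i, a i ∈ Finset.Ioc x (x + H)) (hb : ∀ i, b i ∈ Finset.Ioc x (x + H))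
    (h : (∏ i, a i) * ∏ j, c j = (∏ i, b i) * D) :
    (∃ σ : Equiv.Perm (Fin k), b = a ∘ σ) ∨ HasShortDivisorProduct H x a c := by
  refine (map_eq_or_hasShortDivisorProduct hH ha hb k Finset.univ Finset.univ (by simp) (by simp)
    h).imp_left fun hm => ?_
  exact exists_perm_of_map_univ_eq hm

lemma card_divisors_mul_le (m n : ℕ) :
    (m * n).divisors.card ≤ m.divisors.card * n.divisors.card := by
  rw [Nat.divisors_mul]
  exact Finset.card_mul_le

lemma card_divisors_prod_le {ι : Type*} (s : Finset ι) (a : ι → ℕ) :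
    (∏ i ∈ s, a i).divisors.card ≤ ∏ i ∈ s, (a i).divisors.card := by
  classical
  induction s using Finset.induction_on with
  | empty => simp
  | insert i s hi ih =>
    rw [Finset.prod_insert hi, Finset.prod_insert hi]
    exact (card_divisors_mul_le _ _).trans (Nat.mul_le_mul_left _ ih)

lemma sum_inv_Icc_le (N : ℕ) : ∑ n ∈ Finset.Icc 1 N, (n : ℝ)⁻¹ ≤ 1 + Real.log N := by
  have := harmonic_le_one_add_log N
  rw [harmonic_eq_sum_Icc] at this
  simpa using this

lemma sum_card_divisors_pow_div_le (m N : ℕ) :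
    ∑ n ∈ Finset.Icc 1 N, (n.divisors.card : ℝ) ^ m / n ≤ (1 + Real.log N) ^ (2 ^ m) := by
  induction m with
  | zero => simpa using sum_inv_Icc_le N
  | succ m ih =>
    have hnn : ∀ n : ℕ, 0 ≤ (n.divisors.card : ℝ) ^ m / n := fun n => by positivity
    calc ∑ n ∈ Finset.Icc 1 N, (n.divisors.card : ℝ) ^ (m + 1) / n
        = ∑ n ∈ Finset.Icc 1 N, ∑ p ∈ n.divisorsAntidiagonal,
            ((p.1 * p.2).divisors.card : ℝ) ^ m / (p.1 * p.2 : ℕ) := by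
          refine Finset.sum_congr rfl fun n _ => ?_
          rw [Finset.sum_congr rfl (g := fun _ => (n.divisors.card : ℝ) ^ m / n) fun p hp => by
            rw [(Nat.mem_divisorsAntidiagonal.mp hp).1]]
          rw [Finset.sum_const, ← Nat.map_div_right_divisors, Finset.card_map, nsmul_eq_mul]
          ring
      _ ≤ ∑ n ∈ Finset.Icc 1 N, ∑ p ∈ n.divisorsAntidiagonal,
            ((p.1.divisors.card : ℝ) ^ m / p.1) * ((p.2.divisors.card : ℝ) ^ m / p.2) := by
          gcongr with n _ p _
          rw [div_mul_div_comm, ← mul_pow]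
          push_cast
          gcongr
          exact_mod_cast card_divisors_mul_le _ _
      _ ≤ ∑ p ∈ Finset.Icc 1 N ×ˢ Finset.Icc 1 N,
            ((p.1.divisors.card : ℝ) ^ m / p.1) * ((p.2.divisors.card : ℝ) ^ m / p.2) := by
          rw [← Finset.sum_biUnion]
          · refine Finset.sum_le_sum_of_subset_of_nonneg (fun p hp => ?_)
              fun p _ _ => mul_nonneg (hnn _) (hnn _)
            simp only [Finset.mem_biUnion, Finset.mem_Icc, Nat.mem_divisorsAntidiagonal,
              Finset.mem_product] at hp ⊢
            obtain ⟨n, hn, hpn, -⟩ := hp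
            have h1 : 0 < p.1 := Nat.pos_of_mul_pos_right (by omega : 0 < p.1 * p.2)
            have h2 : 0 < p.2 := Nat.pos_of_mul_pos_left (by omega : 0 < p.1 * p.2)
            have := Nat.le_mul_of_pos_right p.1 h2
            have := Nat.le_mul_of_pos_left p.2 h1
            omega
          · intro n _ n' _ hne
            rw [Function.onFun, Finset.disjoint_left]
            intro p hp hp'
            exact hne ((Nat.mem_divisorsAntidiagonal.mp hp).1.symm.trans
              (Nat.mem_divisorsAntidiagonal.mp hp').1)
      _ = (∑ n ∈ Finset.Icc 1 N, (n.divisors.card : ℝ) ^ m / n) ^ 2 := by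
          rw [sq, Finset.sum_mul_sum, Finset.sum_product]
      _ ≤ ((1 + Real.log N) ^ (2 ^ m)) ^ 2 := by
          gcongr
      _ = _ := by rw [← pow_mul, pow_succ]

lemma sum_card_divisors_pow_le (m N : ℕ) :
    ∑ n ∈ Finset.Icc 1 N, (n.divisors.card : ℝ) ^ m ≤ N * (1 + Real.log N) ^ (2 ^ m) := by
  refine le_trans ?_ (mul_le_mul_of_nonneg_left (sum_card_divisors_pow_div_le m N) N.cast_nonneg)
  rw [Finset.mul_sum]
  refine Finset.sum_le_sum fun n hn => ?_
  have hn' := Finset.mem_Icc.mp hn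
  have h0 : (0 : ℝ) < n := by exact_mod_cast hn'.1
  rw [mul_div_assoc', le_div_iff₀ h0, mul_comm]
  gcongr
  exact hn'.2

/-- The `k`-tuples of elements of `(x, x + H]`. -/
abbrev shortTuples (k H x : ℕ) : Finset (Fin k → ℕ) :=
  Fintype.piFinset fun _ => Finset.Ioc x (x + H)

lemma card_filter_mem_Ioc_le (H X n : ℕ) :
    ((Finset.Icc 1 X).filter fun x => n ∈ Finset.Ioc x (x + H)).card ≤ H := by
  calc _ ≤ (Finset.Ico (n - H) n).card := Finset.card_le_card fun x hx => by
        simp only [Finset.mem_filter, Finset.mem_Ioc, Finset.mem_Ico] at hx ⊢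
        omega
    _ ≤ H := by simp; omega

lemma sum_sum_prod_card_divisors_pow_le {k : ℕ} (hk : 1 ≤ k) (m X H : ℕ) :
    ∑ x ∈ Finset.Icc 1 X, ∑ a ∈ shortTuples k H x, ∏ i, ((a i).divisors.card : ℝ) ^ m ≤
      (H : ℝ) ^ k * ((X + H : ℕ) * (1 + Real.log (X + H : ℕ)) ^ (2 ^ (m * k))) := by
  obtain ⟨j, rfl⟩ : ∃ j, k = j + 1 := ⟨k - 1, by omega⟩
  calc ∑ x ∈ Finset.Icc 1 X, ∑ a ∈ shortTuples (j + 1) H x, ∏ i, ((a i).divisors.card : ℝ) ^ m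
      ≤ ∑ x ∈ Finset.Icc 1 X, (H : ℝ) ^ j *
          ∑ n ∈ Finset.Ioc x (x + H), (n.divisors.card : ℝ) ^ (m * (j + 1)) := by
        refine Finset.sum_le_sum fun x _ => ?_
        rw [← Finset.prod_univ_sum (fun _ => Finset.Ioc x (x + H))
          (fun _ n => ((n.divisors.card : ℝ) ^ m))]
        have := pow_sum_div_card_le_sum_pow (s := Finset.Ioc x (x + H))
          (f := fun n => (n.divisors.card : ℝ) ^ m) (fun _ _ => by positivity) j
        rcases Nat.eq_zero_or_pos H with rfl | hH
        · simp
        rw [div_le_iff₀ (by simp; positivity)] at this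
        simp only [Finset.prod_const, Finset.card_univ, Fintype.card_fin, pow_mul]
        refine this.trans_eq ?_
        simp [mul_comm]
    _ = (H : ℝ) ^ j * ∑ x ∈ Finset.Icc 1 X, ∑ n ∈ Finset.Icc 1 (X + H),
          if n ∈ Finset.Ioc x (x + H) then (n.divisors.card : ℝ) ^ (m * (j + 1)) else 0 := by
        rw [Finset.mul_sum]
        refine Finset.sum_congr rfl fun x hx => ?_
        rw [← Finset.sum_filter]
        congr 2
        ext n
        simp only [Finset.mem_Icc, Finset.mem_filter, Finset.mem_Ioc] at hx ⊢
        omega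
    _ ≤ (H : ℝ) ^ j * ∑ n ∈ Finset.Icc 1 (X + H), H * (n.divisors.card : ℝ) ^ (m * (j + 1)) := by
        rw [Finset.sum_comm]
        gcongr with n _
        rw [← Finset.sum_filter, Finset.sum_const, nsmul_eq_mul]
        gcongr
        exact card_filter_mem_Ioc_le H X n
    _ ≤ _ := by
        rw [← Finset.mul_sum, ← mul_assoc, ← pow_succ]
        gcongr
        exact sum_card_divisors_pow_le _ _

lemma card_filter_dvd_Ioc_le {g H : ℕ} (hg : g ∈ Finset.Icc 1 H) (x : ℕ) :
    (((Finset.Ioc x (x + H)).filter (g ∣ ·)).card : ℝ) ≤ 2 * H / g := by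
  obtain ⟨hg1, hgH⟩ := Finset.mem_Icc.mp hg
  have hle : ((Finset.Ioc x (x + H)).filter (g ∣ ·)).card ≤ H / g + 1 := by
    calc _ ≤ ((Finset.Ioc (x / g) (x / g + (H / g + 1))).image (g * ·)).card := by
          refine Finset.card_le_card fun n hn => ?_
          simp only [Finset.mem_filter, Finset.mem_Ioc, Finset.mem_image] at hn ⊢
          obtain ⟨⟨h1, h2⟩, q, rfl⟩ := hn
          refine ⟨q, ⟨Nat.div_lt_of_lt_mul h1, ?_⟩, rfl⟩
          have e1 := Nat.div_add_mod x g
          have e2 := Nat.div_add_mod H g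
          have e3 := Nat.mod_lt x hg1
          have e4 := Nat.mod_lt H hg1
          have : g * q < g * (x / g + (H / g + 1) + 1) := by nlinarith
          exact Nat.lt_succ_iff.mp (Nat.lt_of_mul_lt_mul_left this)
      _ ≤ _ := Finset.card_image_le
      _ = _ := by simp
  have h0 : (0 : ℝ) < g := by exact_mod_cast hg1
  calc _ ≤ ((H / g + 1 : ℕ) : ℝ) := by exact_mod_cast hle
    _ ≤ H / g + 1 := by push_cast; gcongr; exact Nat.cast_div_le
    _ ≤ H / g + H / g := by
        gcongr
        rw [le_div_iff₀ h0, one_mul]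
        exact_mod_cast hgH
    _ = _ := by ring

lemma sum_card_short_divisors_le (k H X η : ℕ) :
    ∑ x ∈ Finset.Icc 1 X, ∑ a ∈ shortTuples k H x,
      (((Fintype.piFinset fun _ : Fin k => Finset.Icc 1 H).filter fun g =>
        (∀ i, g i ∣ a i) ∧ η * ∏ i, g i ∈ Finset.Ioc x (x + H)).card : ℝ) ≤
      H * (2 * H * (1 + Real.log H)) ^ k := by
  simp only [Finset.card_filter, Nat.cast_sum]
  calc _ = ∑ g ∈ Fintype.piFinset fun _ : Fin k => Finset.Icc 1 H, ∑ x ∈ Finset.Icc 1 X,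
        (if η * ∏ i, g i ∈ Finset.Ioc x (x + H) then 1 else 0) *
          ∏ i, (((Finset.Ioc x (x + H)).filter (g i ∣ ·)).card : ℝ) := by
        conv_rhs => rw [Finset.sum_comm]
        refine Finset.sum_congr rfl fun x _ => ?_
        rw [Finset.sum_comm]
        refine Finset.sum_congr rfl fun g _ => ?_
        by_cases hg : η * ∏ i, g i ∈ Finset.Ioc x (x + H)
        · simp only [hg, and_true, if_true, one_mul]
          rw [← Nat.cast_prod, ← Fintype.card_piFinset, ← Nat.cast_sum, ← Finset.card_filter]
          congr 2
          ext a
          simp [forall_and]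
        · simp [hg]
    _ ≤ ∑ g ∈ Fintype.piFinset fun _ : Fin k => Finset.Icc 1 H, ∑ x ∈ Finset.Icc 1 X,
        (if η * ∏ i, g i ∈ Finset.Ioc x (x + H) then 1 else 0) * ∏ i, (2 * H / g i : ℝ) := by
        gcongr with g hg x _ i _
        exact card_filter_dvd_Ioc_le (Fintype.mem_piFinset.mp hg i) x
    _ ≤ ∑ g ∈ Fintype.piFinset fun _ : Fin k => Finset.Icc 1 H, H * ∏ i, (2 * H / g i : ℝ) := by
        gcongr with g _
        rw [← Finset.sum_mul]
        gcongr
        rw [← Finset.sum_filter, Finset.sum_const, nsmul_eq_mul, mul_one, Nat.cast_le]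
        exact card_filter_mem_Ioc_le H X _
    _ = H * (2 * H * ∑ n ∈ Finset.Icc 1 H, (n : ℝ)⁻¹) ^ k := by
        rw [← Finset.mul_sum, ← Finset.prod_univ_sum (fun _ => Finset.Icc 1 H)
          (fun _ n => (2 * H / n : ℝ))]
        simp [Finset.mul_sum, div_eq_mul_inv]
    _ ≤ _ := by
        gcongr
        exact sum_inv_Icc_le H

/-- Pairs of a starting point `x ≤ X` and a `k`-tuple of elements of `(x, x + H]`. -/
abbrev pointedTuples (k H X : ℕ) : Finset (Σ _ : ℕ, Fin k → ℕ) :=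
  (Finset.Icc 1 X).sigma (shortTuples k H)

/-- The number of pairs of tuples in the same intervals with the same total product. -/
def coincidenceCount {k : ℕ} (H : ℕ) (p q : Σ _ : ℕ, Fin k → ℕ) : ℕ :=
  ((shortTuples k H p.1 ×ˢ shortTuples k H q.1).filter fun s =>
    (∏ i, p.2 i) * ∏ i, q.2 i = (∏ i, s.1 i) * ∏ i, s.2 i).card

lemma coincidenceCount_comm {k : ℕ} (H : ℕ) (p q : Σ _ : ℕ, Fin k → ℕ) :
    coincidenceCount H p q = coincidenceCount H q p := by
  unfold coincidenceCount
  refine Finset.card_bij' (fun s _ => s.swap) (fun s _ => s.swap) ?_ ?_ ?_ ?_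
  · intro s hs
    simp only [Finset.mem_filter, Finset.mem_product] at hs ⊢
    exact ⟨hs.1.symm, by simpa [mul_comm] using hs.2⟩
  · intro s hs
    simp only [Finset.mem_filter, Finset.mem_product] at hs ⊢
    exact ⟨hs.1.symm, by simpa [mul_comm] using hs.2⟩
  · simp
  · simp

lemma pos_of_mem_shortTuples {k H x : ℕ} {a : Fin k → ℕ} (ha : a ∈ shortTuples k H x) (i : Fin k) :
    0 < a i :=
  (Nat.zero_le x).trans_lt (Finset.mem_Ioc.mp (Fintype.mem_piFinset.mp ha i)).1

lemma coincidenceCount_le_divisors {k H X : ℕ} {p q : Σ _ : ℕ, Fin k → ℕ}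
    (hp : p ∈ pointedTuples k H X) (hq : q ∈ pointedTuples k H X) :
    coincidenceCount H p q ≤
      ((∏ i, (p.2 i).divisors.card) * ∏ i, (q.2 i).divisors.card) ^ (2 * k) := by
  set N := (∏ i, p.2 i) * ∏ i, q.2 i with hN
  have hN0 : N ≠ 0 := mul_ne_zero
    (Finset.prod_ne_zero_iff.mpr fun i _ =>
      (pos_of_mem_shortTuples (Finset.mem_sigma.mp hp).2 i).ne')
    (Finset.prod_ne_zero_iff.mpr fun i _ =>
      (pos_of_mem_shortTuples (Finset.mem_sigma.mp hq).2 i).ne')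
  calc coincidenceCount H p q
      ≤ ((Fintype.piFinset fun _ : Fin k => N.divisors) ×ˢ
          (Fintype.piFinset fun _ : Fin k => N.divisors)).card := by
        refine Finset.card_le_card fun s hs => ?_
        obtain ⟨-, hs⟩ := Finset.mem_filter.mp hs
        simp only [Finset.mem_product, Fintype.mem_piFinset, Nat.mem_divisors]
        refine ⟨fun i => ⟨?_, hN0⟩, fun i => ⟨?_, hN0⟩⟩
        · rw [hN, hs]
          exact (Finset.dvd_prod_of_mem _ (Finset.mem_univ i)).mul_right _
        · rw [hN, hs]
          exact (Finset.dvd_prod_of_mem _ (Finset.mem_univ i)).mul_left _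
    _ = N.divisors.card ^ (2 * k) := by
        simp [two_mul, pow_add]
    _ ≤ _ := by
        gcongr
        exact (card_divisors_mul_le _ _).trans
          (Nat.mul_le_mul (card_divisors_prod_le _ _) (card_divisors_prod_le _ _))

lemma coincidenceCount_le_factorial {k H X : ℕ} (hH : 1 ≤ H) {p q : Σ _ : ℕ, Fin k → ℕ}
    (hp : p ∈ pointedTuples k H X) (hq : q ∈ pointedTuples k H X)
    (hpq : ¬ HasShortDivisorProduct H p.1 p.2 q.2) (hqp : ¬ HasShortDivisorProduct H q.1 q.2 p.2) :
    coincidenceCount H p q ≤ k.factorial ^ 2 := by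
  calc coincidenceCount H p q
      ≤ ((Finset.univ : Finset (Equiv.Perm (Fin k) × Equiv.Perm (Fin k))).image
          fun σ => (p.2 ∘ σ.1, q.2 ∘ σ.2)).card := by
        refine Finset.card_le_card fun s hs => ?_
        obtain ⟨hs, h⟩ := Finset.mem_filter.mp hs
        obtain ⟨h1, h2⟩ := Finset.mem_product.mp hs
        obtain ⟨σ, hσ⟩ := (exists_perm_or_hasShortDivisorProduct hH
          (Fintype.mem_piFinset.mp (Finset.mem_sigma.mp hp).2) (Fintype.mem_piFinset.mp h1)
          h).resolve_right hpq
        obtain ⟨τ, hτ⟩ := (exists_perm_or_hasShortDivisorProduct hH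
          (Fintype.mem_piFinset.mp (Finset.mem_sigma.mp hq).2) (Fintype.mem_piFinset.mp h2)
          (by rw [mul_comm, h, mul_comm])).resolve_right hqp
        exact Finset.mem_image.mpr ⟨(σ, τ), Finset.mem_univ _, by rw [← hσ, ← hτ]⟩
    _ ≤ _ := Finset.card_image_le
    _ = _ := by simp [sq, Fintype.card_prod, Fintype.card_perm]

open Classical in
lemma sum_hasShortDivisorProduct_le {k : ℕ} (hk : 1 ≤ k) {H X : ℕ} (hH : 1 ≤ H) :
    ∑ q ∈ pointedTuples k H X, ∑ p ∈ pointedTuples k H X,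
      (if HasShortDivisorProduct H p.1 p.2 q.2 then (1 : ℝ) else 0) ≤
      (H * (2 * H * (1 + Real.log H)) ^ k) *
        ((H : ℝ) ^ k * ((X + H : ℕ) * (1 + Real.log (X + H : ℕ)) ^ (2 ^ k))) := by
  have hlog : 0 ≤ 1 + Real.log H := by positivity
  calc _ ≤ ∑ q ∈ pointedTuples k H X, ∑ p ∈ pointedTuples k H X,
        ∑ h ∈ Fintype.piFinset fun j => (q.2 j).divisors,
          (((Fintype.piFinset fun _ : Fin k => Finset.Icc 1 H).filter fun g =>
            (∀ i, g i ∣ p.2 i) ∧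
              (∏ j, h j) * ∏ i, g i ∈ Finset.Ioc p.1 (p.1 + H)).card : ℝ) := by
        refine Finset.sum_le_sum fun q hq => Finset.sum_le_sum fun p _ => ?_
        split_ifs with hbad
        · obtain ⟨h, g, hh, hg, hga, hmem⟩ := hbad
          have hmem_h : h ∈ Fintype.piFinset fun j => (q.2 j).divisors :=
            Fintype.mem_piFinset.mpr fun j => Nat.mem_divisors.mpr
              ⟨hh j, (pos_of_mem_shortTuples (Finset.mem_sigma.mp hq).2 j).ne'⟩
          refine le_trans ?_ (Finset.single_le_sum (fun _ _ => Nat.cast_nonneg _) hmem_h)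
          rw [Nat.one_le_cast, Nat.one_le_iff_ne_zero, ← Nat.pos_iff_ne_zero, Finset.card_pos]
          exact ⟨g, Finset.mem_filter.mpr ⟨Fintype.mem_piFinset.mpr hg, hga, hmem⟩⟩
        · exact Finset.sum_nonneg fun _ _ => Nat.cast_nonneg _
    _ ≤ ∑ q ∈ pointedTuples k H X, ∑ h ∈ Fintype.piFinset fun j => (q.2 j).divisors,
          (H * (2 * H * (1 + Real.log H)) ^ k : ℝ) := by
        refine Finset.sum_le_sum fun q _ => ?_
        rw [Finset.sum_comm]
        refine Finset.sum_le_sum fun h _ => ?_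
        rw [Finset.sum_sigma]
        exact sum_card_short_divisors_le k H X _
    _ = (H * (2 * H * (1 + Real.log H)) ^ k) *
        ∑ x ∈ Finset.Icc 1 X, ∑ a ∈ shortTuples k H x, ∏ i, ((a i).divisors.card : ℝ) ^ 1 := by
        rw [Finset.sum_sigma]
        simp only [Finset.sum_const, nsmul_eq_mul, Fintype.card_piFinset, Nat.cast_prod, pow_one,
          Finset.mul_sum]
        simp only [mul_comm]
    _ ≤ _ := by
        have := sum_sum_prod_card_divisors_pow_le hk 1 X H
        rw [one_mul] at this
        gcongr

lemma sum_coincidenceCount_sq_le {k : ℕ} (hk : 1 ≤ k) (H X : ℕ) :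
    ∑ q ∈ pointedTuples k H X, ∑ p ∈ pointedTuples k H X, (coincidenceCount H p q : ℝ) ^ 2 ≤
      ((H : ℝ) ^ k * ((X + H : ℕ) * (1 + Real.log (X + H : ℕ)) ^ (2 ^ (4 * k * k)))) ^ 2 := by
  calc _ ≤ ∑ q ∈ pointedTuples k H X, ∑ p ∈ pointedTuples k H X,
        (∏ i, ((q.2 i).divisors.card : ℝ) ^ (4 * k)) *
          ∏ i, ((p.2 i).divisors.card : ℝ) ^ (4 * k) := by
        refine Finset.sum_le_sum fun q hq => Finset.sum_le_sum fun p hp => ?_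
        have := coincidenceCount_le_divisors hp hq
        calc (coincidenceCount H p q : ℝ) ^ 2
            ≤ ((((∏ i, (p.2 i).divisors.card) * ∏ i, (q.2 i).divisors.card) ^ (2 * k) : ℕ) : ℝ)
                ^ 2 := by gcongr
          _ = _ := by
            push_cast
            rw [Finset.prod_pow, Finset.prod_pow, ← mul_pow, ← pow_mul, mul_comm (∏ i, _)]
            congr 1
            ring
    _ = (∑ x ∈ Finset.Icc 1 X, ∑ a ∈ shortTuples k H x,
          ∏ i, ((a i).divisors.card : ℝ) ^ (4 * k)) ^ 2 := by
        rw [← Finset.sum_mul_sum, Finset.sum_sigma, sq]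
    _ ≤ _ := by
        gcongr
        exact sum_sum_prod_card_divisors_pow_le hk (4 * k) X H

open Classical in
lemma sq_sum_coincidenceCount_short_le {k : ℕ} (hk : 1 ≤ k) {H X : ℕ} (hH : 1 ≤ H) :
    (∑ q ∈ pointedTuples k H X, ∑ p ∈ pointedTuples k H X,
      (coincidenceCount H p q : ℝ) *
        if HasShortDivisorProduct H p.1 p.2 q.2 then (1 : ℝ) else 0) ^ 2 ≤
      ((H : ℝ) ^ k * ((X + H : ℕ) * (1 + Real.log (X + H : ℕ)) ^ (2 ^ (4 * k * k)))) ^ 2 *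
      ((H * (2 * H * (1 + Real.log H)) ^ k) *
        ((H : ℝ) ^ k * ((X + H : ℕ) * (1 + Real.log (X + H : ℕ)) ^ (2 ^ k)))) := by
  have h1 := sum_coincidenceCount_sq_le hk H X
  have h2 := sum_hasShortDivisorProduct_le hk hH (X := X)
  rw [← Finset.sum_product'] at h1 h2 ⊢
  refine (Finset.sum_mul_sq_le_sq_mul_sq _ _ _).trans ?_
  gcongr
  simpa using h2

lemma sum_coincidenceCount_le {k : ℕ} (hk : 1 ≤ k) {H X : ℕ} (hH : 1 ≤ H) :
    ∑ q ∈ pointedTuples k H X, ∑ p ∈ pointedTuples k H X, (coincidenceCount H p q : ℝ) ≤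
      (k.factorial : ℝ) ^ 2 * (X * (H : ℝ) ^ k) ^ 2 + 2 * √(
      ((H : ℝ) ^ k * ((X + H : ℕ) * (1 + Real.log (X + H : ℕ)) ^ (2 ^ (4 * k * k)))) ^ 2 *
      ((H * (2 * H * (1 + Real.log H)) ^ k) *
        ((H : ℝ) ^ k * ((X + H : ℕ) * (1 + Real.log (X + H : ℕ)) ^ (2 ^ k))))) := by
  classical
  have hcard : ((pointedTuples k H X).card : ℝ) = X * (H : ℝ) ^ k := by simp
  have hshort := Real.le_sqrt_of_sq_le (sq_sum_coincidenceCount_short_le hk hH (X := X))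
  have hsplit : ∀ q ∈ pointedTuples k H X, ∀ p ∈ pointedTuples k H X,
      (coincidenceCount H p q : ℝ) ≤ (k.factorial : ℝ) ^ 2 +
        ((coincidenceCount H p q : ℝ) *
          (if HasShortDivisorProduct H p.1 p.2 q.2 then (1 : ℝ) else 0) +
        (coincidenceCount H q p : ℝ) *
          if HasShortDivisorProduct H q.1 q.2 p.2 then (1 : ℝ) else 0) := by
    intro q hq p hp
    rw [coincidenceCount_comm H q p]
    have h0 : (0 : ℝ) ≤ coincidenceCount H p q := Nat.cast_nonneg _
    have h1 : (0 : ℝ) ≤ (k.factorial : ℝ) ^ 2 := by positivity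
    by_cases hpq : HasShortDivisorProduct H p.1 p.2 q.2
    · by_cases hqp : HasShortDivisorProduct H q.1 q.2 p.2
      · simp only [hpq, hqp, if_true, mul_one]
        linarith
      · simp [hpq, hqp]
    · by_cases hqp : HasShortDivisorProduct H q.1 q.2 p.2
      · simp [hpq, hqp]
      · simpa [hpq, hqp] using (show (coincidenceCount H p q : ℝ) ≤ (k.factorial : ℝ) ^ 2 by
          exact_mod_cast coincidenceCount_le_factorial hH hp hq hpq hqp)
  calc _ ≤ _ := Finset.sum_le_sum fun q hq => Finset.sum_le_sum fun p hp => hsplit q hq p hp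
    _ ≤ _ := by
      simp only [Finset.sum_add_distrib]
      rw [Finset.sum_comm (f := fun q p => (coincidenceCount H q p : ℝ) * _)]
      simp only [Finset.sum_const, nsmul_eq_mul, hcard]
      linarith

lemma factorial_mul_descFactorial_le (k H x : ℕ) :
    k.factorial * H.descFactorial k ≤
      ∑ a ∈ shortTuples k H x, ((shortTuples k H x).filter fun b => ∏ i, a i = ∏ i, b i).card := by
  classical
  have hinj : ((shortTuples k H x).filter Function.Injective).card = H.descFactorial k := by
    have : Fintype.card (Fin k ↪ Finset.Ioc x (x + H)) = H.descFactorial k := by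
      simp [Fintype.card_embedding_eq]
    rw [← this, ← Finset.card_univ]
    symm
    refine Finset.card_bij (fun e _ i => (e i : ℕ)) ?_ ?_ ?_
    · intro e _
      simp only [Finset.mem_filter, Fintype.mem_piFinset]
      exact ⟨fun i => (e i).2, Subtype.val_injective.comp e.injective⟩
    · intro e _ e' _ h
      ext i
      exact congrFun h i
    · intro a ha
      simp only [Finset.mem_filter, Fintype.mem_piFinset] at ha
      exact ⟨⟨fun i => ⟨a i, ha.1 i⟩, fun i j hij => ha.2 (congrArg Subtype.val hij)⟩,
        Finset.mem_univ _, rfl⟩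
  calc k.factorial * H.descFactorial k
      = ∑ a ∈ (shortTuples k H x).filter Function.Injective, k.factorial := by
        rw [Finset.sum_const, hinj, smul_eq_mul, mul_comm]
    _ ≤ ∑ a ∈ (shortTuples k H x).filter Function.Injective,
          ((shortTuples k H x).filter fun b => ∏ i, a i = ∏ i, b i).card := by
        refine Finset.sum_le_sum fun a ha => ?_
        obtain ⟨ha, hainj⟩ := Finset.mem_filter.mp ha
        rw [Fintype.mem_piFinset] at ha
        have : (Finset.univ : Finset (Equiv.Perm (Fin k))).card = k.factorial := by
          simp [Fintype.card_perm]
        rw [← this]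
        refine Finset.card_le_card_of_injOn (fun σ => a ∘ σ) (fun σ _ => ?_) fun σ _ τ _ h => ?_
        · simp only [Finset.coe_filter, Set.mem_ofPred_eq, Fintype.mem_piFinset, Function.comp_apply]
          exact ⟨fun i => ha _, (Equiv.prod_comp σ a).symm⟩
        · exact Equiv.ext fun i => hainj (congrFun h i)
    _ ≤ _ := Finset.sum_le_sum_of_subset (Finset.filter_subset _ _)

lemma norm_AHf_pow (k X : ℕ) (H : ℕ → ℕ) (ω : Fin (X + H X + 1) → ℝ) (x : ℕ) :
    ‖AHf X H ω x‖ ^ (2 * k) = ((H X : ℝ) ^ k)⁻¹ *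
      ‖∑ a ∈ shortTuples k (H X) x, steinhausF (X + H X) ω (∏ i, a i)‖ ^ 2 := by
  have hsum : ∑ a ∈ shortTuples k (H X) x, steinhausF (X + H X) ω (∏ i, a i) =
      (∑ n ∈ Finset.Ioc x (x + H X), steinhausF (X + H X) ω n) ^ k := by
    have := Finset.prod_univ_sum (fun _ : Fin k => Finset.Ioc x (x + H X))
      (fun _ n => steinhausF (X + H X) ω n)
    simp only [Finset.prod_const, Finset.card_univ, Fintype.card_fin] at this
    rw [this]
    exact Finset.sum_congr rfl fun a ha =>
      steinhausF_prod _ _ _ _ fun i _ => (pos_of_mem_shortTuples ha i).ne'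
  rw [hsum, AHf, norm_mul, mul_pow, norm_inv, Complex.norm_real, Real.norm_eq_abs,
    abs_of_nonneg (Real.sqrt_nonneg _), inv_pow, pow_mul (√_), Real.sq_sqrt (Nat.cast_nonneg _),
    norm_pow]
  ring

lemma prime_le_of_dvd_prod_shortTuples {k H X x : ℕ} (hx : x ∈ Finset.Icc 1 X) {a : Fin k → ℕ}
    (ha : a ∈ shortTuples k H x) {p : ℕ} (hp : p.Prime) (hpa : p ∣ ∏ i, a i) : p ≤ X + H := by
  obtain ⟨i, -, hi⟩ := (Prime.dvd_finsetProd_iff hp.prime _).mp hpa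
  have h1 := Nat.le_of_dvd (pos_of_mem_shortTuples ha i) hi
  have h2 := Finset.mem_Ioc.mp (Fintype.mem_piFinset.mp ha i)
  have h3 := Finset.mem_Icc.mp hx
  omega

lemma prod_shortTuples_ne_zero {k H x : ℕ} {a : Fin k → ℕ} (ha : a ∈ shortTuples k H x) :
    ∏ i, a i ≠ 0 :=
  Finset.prod_ne_zero_iff.mpr fun i _ => (pos_of_mem_shortTuples ha i).ne'

lemma integrable_norm_AHf_pow (k X : ℕ) (H : ℕ → ℕ) (x : ℕ) :
    Integrable (fun ω => ‖AHf X H ω x‖ ^ (2 * k)) (steinhausMeasure (X + H X)) := by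
  simp only [norm_AHf_pow]
  exact (integrable_normSq_sum_steinhausF _ _ _).const_mul _

lemma le_integral_norm_AHf_pow {k X x : ℕ} {H : ℕ → ℕ} (hx : x ∈ Finset.Icc 1 X) :
    (k.factorial : ℝ) * ((H X).descFactorial k / (H X : ℝ) ^ k) ≤
      ∫ ω, ‖AHf X H ω x‖ ^ (2 * k) ∂(steinhausMeasure (X + H X)) := by
  simp only [norm_AHf_pow]
  rw [integral_const_mul, integral_normSq_sum_steinhausF _ _
    (fun t ht => prod_shortTuples_ne_zero ht)
    (fun t ht p hp hpt => prime_le_of_dvd_prod_shortTuples hx ht hp hpt), mul_div_assoc',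
    div_eq_inv_mul]
  gcongr
  exact_mod_cast factorial_mul_descFactorial_le k (H X) x

lemma norm_AHf_pow_mul (k X : ℕ) (H : ℕ → ℕ) (ω : Fin (X + H X + 1) → ℝ) (x y : ℕ) :
    ‖AHf X H ω x‖ ^ (2 * k) * ‖AHf X H ω y‖ ^ (2 * k) = (((H X : ℝ) ^ k) ^ 2)⁻¹ *
      ‖∑ s ∈ shortTuples k (H X) x ×ˢ shortTuples k (H X) y,
        steinhausF (X + H X) ω ((∏ i, s.1 i) * ∏ i, s.2 i)‖ ^ 2 := by
  rw [norm_AHf_pow, norm_AHf_pow, mul_mul_mul_comm, ← mul_pow, ← norm_mul, Finset.sum_mul_sum,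
    ← Finset.sum_product', sq ((H X : ℝ) ^ k), mul_inv]
  congr 3
  refine Finset.sum_congr rfl fun s hs => ?_
  obtain ⟨h1, h2⟩ := Finset.mem_product.mp hs
  exact (steinhausF_mul _ _ (prod_shortTuples_ne_zero h1) (prod_shortTuples_ne_zero h2)).symm

lemma integrable_norm_AHf_pow_mul (k X : ℕ) (H : ℕ → ℕ) (x y : ℕ) :
    Integrable (fun ω => ‖AHf X H ω x‖ ^ (2 * k) * ‖AHf X H ω y‖ ^ (2 * k))
      (steinhausMeasure (X + H X)) := by
  simp only [norm_AHf_pow_mul]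
  exact (integrable_normSq_sum_steinhausF _ _ _).const_mul _

lemma integral_norm_AHf_pow_mul {k X x y : ℕ} {H : ℕ → ℕ} (hx : x ∈ Finset.Icc 1 X)
    (hy : y ∈ Finset.Icc 1 X) :
    ∫ ω, ‖AHf X H ω x‖ ^ (2 * k) * ‖AHf X H ω y‖ ^ (2 * k) ∂(steinhausMeasure (X + H X)) =
      (((H X : ℝ) ^ k) ^ 2)⁻¹ * ∑ a ∈ shortTuples k (H X) x, ∑ c ∈ shortTuples k (H X) y,
        (coincidenceCount (H X) ⟨x, a⟩ ⟨y, c⟩ : ℝ) := by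
  simp only [norm_AHf_pow_mul]
  rw [integral_const_mul, integral_normSq_sum_steinhausF, Finset.sum_product]
  · rfl
  · intro s hs
    obtain ⟨h1, h2⟩ := Finset.mem_product.mp hs
    exact mul_ne_zero (prod_shortTuples_ne_zero h1) (prod_shortTuples_ne_zero h2)
  · intro s hs p hp hps
    obtain ⟨h1, h2⟩ := Finset.mem_product.mp hs
    exact (hp.dvd_mul.mp hps).elim (prime_le_of_dvd_prod_shortTuples hx h1 hp)
      (prime_le_of_dvd_prod_shortTuples hy h2 hp)

/-- The exponent of the logarithm lost in bounding the off-diagonal contribution. -/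
def logExponent (k : ℕ) : ℕ := 2 * 2 ^ (4 * k * k) + k + 2 ^ k

lemma sqrt_offDiagonal_le {k H X : ℕ} (hH : 1 ≤ H) (hHX : H ≤ X) :
    √(((H : ℝ) ^ k * ((X + H : ℕ) * (1 + Real.log (X + H : ℕ)) ^ (2 ^ (4 * k * k)))) ^ 2 *
      ((H * (2 * H * (1 + Real.log H)) ^ k) *
        ((H : ℝ) ^ k * ((X + H : ℕ) * (1 + Real.log (X + H : ℕ)) ^ (2 ^ k))))) ≤
      (X * (H : ℝ) ^ k) ^ 2 *
        √(2 ^ (k + 3) * ((H / X : ℝ) * (1 + Real.log (X + H : ℕ)) ^ logExponent k)) := by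
  have hX0 : (0 : ℝ) < X := by exact_mod_cast (by omega : 0 < X)
  have hH0 : (0 : ℝ) < H := by exact_mod_cast (by omega : 0 < H)
  have hN : ((X + H : ℕ) : ℝ) ≤ 2 * X := by exact_mod_cast (by omega : X + H ≤ 2 * X)
  have hlogH : 0 ≤ 1 + Real.log H := by positivity
  have hΛ : 1 + Real.log H ≤ 1 + Real.log (X + H : ℕ) := by
    gcongr
    omega
  set Λ := 1 + Real.log (X + H : ℕ)
  have hΛ0 : 0 ≤ Λ := hlogH.trans hΛ
  rw [← Real.sqrt_sq (by positivity : 0 ≤ ((X : ℝ) * (H : ℝ) ^ k) ^ 2),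
    ← Real.sqrt_mul (by positivity)]
  refine Real.sqrt_le_sqrt ?_
  calc _ ≤ ((H : ℝ) ^ k * (2 * X * Λ ^ (2 ^ (4 * k * k)))) ^ 2 *
      ((H * (2 * H * Λ) ^ k) * ((H : ℝ) ^ k * (2 * X * Λ ^ (2 ^ k)))) := by gcongr
    _ = _ := by
      rw [logExponent, pow_add Λ, pow_add Λ, pow_mul' Λ 2]
      field_simp
      ring_nf

lemma integral_sq_sub_factorial_le {k X : ℕ} {H : ℕ → ℕ} (hk : 1 ≤ k) (hH : 1 ≤ H X)
    (hHX : H X ≤ X) :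
    ∫ ω, ((1 / (X : ℝ)) * ∑ x ∈ Finset.Icc 1 X, ‖AHf X H ω x‖ ^ (2 * k)
      - (k.factorial : ℝ)) ^ 2 ∂(steinhausMeasure (X + H X)) ≤
    2 * √(2 ^ (k + 3) * ((H X / X : ℝ) * (1 + Real.log (X + H X : ℕ)) ^ logExponent k)) +
      2 * (k.factorial : ℝ) ^ 2 * (1 - (H X).descFactorial k / (H X : ℝ) ^ k) := by
  have hX0 : (0 : ℝ) < X := by exact_mod_cast (by omega : 0 < X)
  have hH0 : (0 : ℝ) < H X := by exact_mod_cast (by omega : 0 < H X)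
  have hexp : ∀ ω, ((1 / (X : ℝ)) * ∑ x ∈ Finset.Icc 1 X, ‖AHf X H ω x‖ ^ (2 * k)
      - (k.factorial : ℝ)) ^ 2 =
      ((X : ℝ) ^ 2)⁻¹ * ∑ x ∈ Finset.Icc 1 X, ∑ y ∈ Finset.Icc 1 X,
        ‖AHf X H ω x‖ ^ (2 * k) * ‖AHf X H ω y‖ ^ (2 * k)
      - 2 * k.factorial / X * (∑ x ∈ Finset.Icc 1 X, ‖AHf X H ω x‖ ^ (2 * k))
      + (k.factorial : ℝ) ^ 2 := by
    intro ω
    rw [← Finset.sum_mul_sum]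
    field_simp
    ring
  have hint2 : Integrable (fun ω => ∑ x ∈ Finset.Icc 1 X, ∑ y ∈ Finset.Icc 1 X,
      ‖AHf X H ω x‖ ^ (2 * k) * ‖AHf X H ω y‖ ^ (2 * k)) (steinhausMeasure (X + H X)) :=
    integrable_finsetSum _ fun x _ => integrable_finsetSum _ fun y _ =>
      integrable_norm_AHf_pow_mul k X H x y
  have hint1 : Integrable (fun ω => ∑ x ∈ Finset.Icc 1 X, ‖AHf X H ω x‖ ^ (2 * k))
      (steinhausMeasure (X + H X)) :=
    integrable_finsetSum _ fun x _ => integrable_norm_AHf_pow k X H x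
  have hsecond : ((X : ℝ) ^ 2)⁻¹ * ∫ ω, ∑ x ∈ Finset.Icc 1 X, ∑ y ∈ Finset.Icc 1 X,
      ‖AHf X H ω x‖ ^ (2 * k) * ‖AHf X H ω y‖ ^ (2 * k) ∂(steinhausMeasure (X + H X)) ≤
      (k.factorial : ℝ) ^ 2 +
    2 * √(2 ^ (k + 3) * ((H X / X : ℝ) * (1 + Real.log (X + H X : ℕ)) ^ logExponent k)) := by
    rw [integral_finsetSum _ fun x _ => integrable_finsetSum _ fun y _ =>
      integrable_norm_AHf_pow_mul k X H x y]
    have hpairs : ∑ x ∈ Finset.Icc 1 X, ∫ ω, ∑ y ∈ Finset.Icc 1 X,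
        ‖AHf X H ω x‖ ^ (2 * k) * ‖AHf X H ω y‖ ^ (2 * k) ∂(steinhausMeasure (X + H X)) =
        (((H X : ℝ) ^ k) ^ 2)⁻¹ * ∑ q ∈ pointedTuples k (H X) X, ∑ p ∈ pointedTuples k (H X) X,
          (coincidenceCount (H X) p q : ℝ) := by
      rw [Finset.sum_comm, Finset.sum_sigma, Finset.mul_sum]
      refine Finset.sum_congr rfl fun x hx => ?_
      rw [integral_finsetSum _ fun y _ => integrable_norm_AHf_pow_mul k X H x y,
        Finset.sum_congr rfl fun y hy => integral_norm_AHf_pow_mul hx hy, ← Finset.mul_sum]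
      simp only [Finset.sum_sigma]
      rw [Finset.sum_comm]
    rw [hpairs]
    have h1 := (sum_coincidenceCount_le hk hH (X := X)).trans
      (add_le_add_right (mul_le_mul_of_nonneg_left (sqrt_offDiagonal_le hH hHX)
        zero_le_two) _)
    rw [← mul_assoc, ← mul_inv, ← mul_pow, inv_mul_le_iff₀ (by positivity)]
    linarith
  have hfirst : (X : ℝ) * ((k.factorial : ℝ) * ((H X).descFactorial k / (H X : ℝ) ^ k)) ≤
      ∫ ω, ∑ x ∈ Finset.Icc 1 X, ‖AHf X H ω x‖ ^ (2 * k) ∂(steinhausMeasure (X + H X)) := by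
    rw [integral_finsetSum _ fun x _ => integrable_norm_AHf_pow k X H x]
    refine le_trans (le_of_eq ?_) (Finset.sum_le_sum fun x hx => le_integral_norm_AHf_pow hx)
    simp
  have hfirst' := mul_le_mul_of_nonneg_left hfirst
    (by positivity : (0 : ℝ) ≤ 2 * k.factorial / X)
  have hcancel : 2 * (k.factorial : ℝ) / X *
      ((X : ℝ) * ((k.factorial : ℝ) * ((H X).descFactorial k / (H X : ℝ) ^ k))) =
      2 * (k.factorial : ℝ) ^ 2 * ((H X).descFactorial k / (H X : ℝ) ^ k) := by
    field_simp
  have hint : Integrable (fun ω => ((X : ℝ) ^ 2)⁻¹ * ∑ x ∈ Finset.Icc 1 X, ∑ y ∈ Finset.Icc 1 X,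
        ‖AHf X H ω x‖ ^ (2 * k) * ‖AHf X H ω y‖ ^ (2 * k)
      - 2 * k.factorial / X * (∑ x ∈ Finset.Icc 1 X, ‖AHf X H ω x‖ ^ (2 * k)))
      (steinhausMeasure (X + H X)) := (hint2.const_mul _).sub (hint1.const_mul _)
  rw [integral_congr_ae (Filter.Eventually.of_forall hexp),
    integral_add hint (integrable_const _),
    integral_sub (hint2.const_mul _) (hint1.const_mul _), integral_const_mul, integral_const_mul]
  simp only [integral_const, probReal_univ, one_smul]
  linarith

lemma tendsto_descFactorial_div_pow (k : ℕ) :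
    Filter.Tendsto (fun n : ℕ => (n.descFactorial k : ℝ) / (n : ℝ) ^ k) Filter.atTop (nhds 1) := by
  have h := isEquivalent_descFactorial k
  exact (Asymptotics.isEquivalent_iff_tendsto_one
    ((Filter.eventually_gt_atTop 0).mono fun n hn => by positivity)).mp h

lemma tendsto_div_mul_log_pow {H : ℕ → ℕ} (E : ℕ)
    (hH : ∀ᶠ X in Filter.atTop, (H X : ℝ) ≤ (X : ℝ) * Real.log X ^ (-((E + 1 : ℕ) : ℝ)))
    (hHX : ∀ᶠ X in Filter.atTop, H X ≤ X) :
    Filter.Tendsto (fun X : ℕ => (H X / X : ℝ) * (1 + Real.log (X + H X : ℕ)) ^ E)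
      Filter.atTop (nhds 0) := by
  have hlog : Filter.Tendsto (fun X : ℕ => Real.log X) Filter.atTop Filter.atTop :=
    Real.tendsto_log_atTop.comp tendsto_natCast_atTop_atTop
  refine squeeze_zero' (g := fun X : ℕ => 3 ^ E / Real.log X)
    (Filter.Eventually.of_forall fun X => by positivity) ?_ (hlog.const_div_atTop _)
  filter_upwards [hH, hHX, hlog.eventually_ge_atTop 1, Filter.eventually_ge_atTop 2]
    with X h1 h2 h3 h4
  have hX0 : (0 : ℝ) < X := by exact_mod_cast (by omega : 0 < X)
  have hΛ : 1 + Real.log (X + H X : ℕ) ≤ 3 * Real.log X := by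
    have : Real.log (X + H X : ℕ) ≤ Real.log ((X : ℝ) * X) := by
      gcongr
      exact_mod_cast (by nlinarith : X + H X ≤ X * X)
    rw [Real.log_mul hX0.ne' hX0.ne'] at this
    linarith
  rw [Real.rpow_neg (by linarith), Real.rpow_natCast] at h1
  calc (H X / X : ℝ) * (1 + Real.log (X + H X : ℕ)) ^ E
      ≤ (Real.log X ^ (E + 1))⁻¹ * (3 * Real.log X) ^ E := by
        gcongr
        rwa [div_le_iff₀' hX0]
    _ = _ := by
        have : Real.log X ≠ 0 := by linarith
        field_simp
        ring

/-- for every `k ≥ 1` there is `c_k > 0` such that for every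
`H : ℕ → ℕ` with `H(X) → ∞` and `H(X) ≤ X·(log X)^{−c_k}` for all large `X`,
`𝔼_f ((1/X) ∑_{x=1}^{X} |A_H(f,x)|^{2k} − k!)² → 0` as `X → ∞`. -/
theorem stmt2 (k : ℕ) (hk : 1 ≤ k) :
    ∃ c : ℝ, 0 < c ∧ ∀ H : ℕ → ℕ,
      Filter.Tendsto H Filter.atTop Filter.atTop →
      (∀ᶠ X in Filter.atTop, (H X : ℝ) ≤ (X : ℝ) * Real.log X ^ (-c)) →
      Filter.Tendsto (fun X : ℕ =>
        ∫ ω, ((1 / (X : ℝ)) * ∑ x ∈ Finset.Icc 1 X, ‖AHf X H ω x‖ ^ (2 * k)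
            - (k.factorial : ℝ)) ^ 2 ∂(steinhausMeasure (X + H X)))
        Filter.atTop (nhds 0) := by

  refine ⟨((logExponent k + 1 : ℕ) : ℝ), by positivity, fun H hHtop hH => ?_⟩
  have hlog : Filter.Tendsto (fun X : ℕ => Real.log X) Filter.atTop Filter.atTop :=
    Real.tendsto_log_atTop.comp tendsto_natCast_atTop_atTop
  have hHX : ∀ᶠ X in Filter.atTop, H X ≤ X := by
    filter_upwards [hH, hlog.eventually_ge_atTop 1] with X h1 h2
    have := h1.trans (mul_le_of_le_one_right X.cast_nonneg
      (Real.rpow_le_one_of_one_le_of_nonpos h2 (neg_nonpos.mpr (Nat.cast_nonneg _))))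
    exact_mod_cast this
  refine squeeze_zero' (Filter.Eventually.of_forall fun X => integral_nonneg fun ω => sq_nonneg _)
    ?_ (g := fun X : ℕ =>
      2 * √(2 ^ (k + 3) * ((H X / X : ℝ) * (1 + Real.log (X + H X : ℕ)) ^ logExponent k)) +
      2 * (k.factorial : ℝ) ^ 2 * (1 - (H X).descFactorial k / (H X : ℝ) ^ k)) ?_
  · filter_upwards [hHX, hHtop.eventually_ge_atTop 1] with X h1 h2
    exact integral_sq_sub_factorial_le hk h2 h1
  · have h1 := ((Real.continuous_sqrt.tendsto _).comp
      ((tendsto_div_mul_log_pow _ hH hHX).const_mul ((2 : ℝ) ^ (k + 3)))).const_mul 2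
    have h2 := (((tendsto_descFactorial_div_pow k).comp hHtop).const_sub 1).const_mul
      (2 * (k.factorial : ℝ) ^ 2)
    simpa using h1.add h2
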